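/- (Monotonicity of the least squares mean) Let A₁, …, Aₙ and B₁, …, Bₙ be m×m positive definite complex matrices with Aᵢ ≤ Bᵢ in the Loewner order for all i, and let w = (w₁, …, wₙ) be a weight (wᵢ > 0, Σᵢ wᵢ = 1). If X is the unique minimizer over positive definite matrices of Y ↦ Σᵢ wᵢ δ²(Y, Aᵢ) and Z is the unique minimizer of Y ↦ Σᵢ wᵢ δ²(Y, Bᵢ), then X ≤ Z in the Loewner order. -/

import Mathlib

/-!
The minimisers satisfy Karcher equations, and solutions of two such equations can be compared in
the Loewner order.

*Karcher equation.* Let `X` minimise `∑ wᵢ δ²(Y, Aᵢ)`, put `Mᵢ = X^{-1/2} Aᵢ X^{-1/2}` and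
`L = ∑ wᵢ log Mᵢ`. For positive `E` the matrices `Y⁻¹ Aᵢ` with `Y = X^{1/2} E⁻¹ X^{1/2}` and
`Mᵢ^{1/2} E Mᵢ^{1/2}` have the same characteristic polynomial, hence
`δ²(Y, Aᵢ) = Tr log² (Mᵢ^{1/2} E Mᵢ^{1/2})`. A trace function `Tr f(M)` has derivative
`H ↦ Tr f'(M) H`: expanding in eigenvectors of `M` and `N`, as in Klein's inequality, turns the
scalar Taylor remainder of `f` into the remainder of the trace function. Along `E = e^{sL}` the
objective therefore has derivative `2 Tr L²` at `s = 0`, and minimality gives `L = 0`.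

*Comparison.* The weighted geometric mean `X #_t A` is monotone in both arguments for `t ∈ [0, 1]`
and homogeneous of degree `1 - t` in `X`. From `aᵗ ≥ 1 + t log a` and the Karcher equation,
`X ≤ ∑ wᵢ (X #_t Aᵢ)`; from `aᵗ ≤ 1 + t log a + t ε` for small `t > 0`,
`∑ wᵢ (Z #_t Bᵢ) ≤ (1 + t ε) Z`. If `r` is the least number with `X ≤ r Z`, then
`X ≤ ∑ wᵢ (r Z #_t Bᵢ) ≤ r^{1-t} (1 + t ε) Z`, whence `r ≤ r^{1-t} (1 + t ε)`. If `r > 1`, taking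
`ε = log r / 2` contradicts `rᵗ ≥ 1 + t log r`; hence `r ≤ 1` and `X ≤ Z`.
-/

open Matrix
open scoped ComplexOrder

noncomputable def matFun {m : ℕ} (f : ℝ → ℝ) (A : Matrix (Fin m) (Fin m) ℂ) :
    Matrix (Fin m) (Fin m) ℂ :=
  if hA : A.IsHermitian then
    (hA.eigenvectorUnitary : Matrix (Fin m) (Fin m) ℂ) *
      Matrix.diagonal (fun i => (f (hA.eigenvalues i) : ℂ)) *
      (star (hA.eigenvectorUnitary : Matrix (Fin m) (Fin m) ℂ))
  else 0

/-- The unique positive definite square root of a positive definite matrix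
(realized via the spectral decomposition). -/
noncomputable def msqrt {m : ℕ} (A : Matrix (Fin m) (Fin m) ℂ) : Matrix (Fin m) (Fin m) ℂ :=
  matFun Real.sqrt A

/-- The logarithm of a positive definite matrix: the unique Hermitian `L` with `exp L = A`. -/
noncomputable def mlog {m : ℕ} (A : Matrix (Fin m) (Fin m) ℂ) : Matrix (Fin m) (Fin m) ℂ :=
  matFun Real.log A

/-- The real power `A ^ t` of a positive definite matrix, via the spectral decomposition. -/
noncomputable def mpow {m : ℕ} (A : Matrix (Fin m) (Fin m) ℂ) (t : ℝ) : Matrix (Fin m) (Fin m) ℂ :=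
  matFun (fun x => x ^ t) A

/-- The matrix geometric mean `A # B`. -/
noncomputable def gmean {m : ℕ} (A B : Matrix (Fin m) (Fin m) ℂ) : Matrix (Fin m) (Fin m) ℂ :=
  msqrt A * msqrt ((msqrt A)⁻¹ * B * (msqrt A)⁻¹) * msqrt A

/-- The weighted geometric mean `A #_t B`. -/
noncomputable def wgmean {m : ℕ} (A B : Matrix (Fin m) (Fin m) ℂ) (t : ℝ) :
    Matrix (Fin m) (Fin m) ℂ :=
  msqrt A * mpow ((msqrt A)⁻¹ * B * (msqrt A)⁻¹) t * msqrt A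

/-- The Frobenius (Hilbert–Schmidt) norm `‖X‖₂ = (Tr(X*X))^{1/2}`. -/
noncomputable def fnorm {m : ℕ} (X : Matrix (Fin m) (Fin m) ℂ) : ℝ :=
  Real.sqrt ((Xᴴ * X).trace.re)

/-- The Riemannian metric `δ(A,B) = ‖log(A^{-1/2} B A^{-1/2})‖₂`. -/
noncomputable def rdist {m : ℕ} (A B : Matrix (Fin m) (Fin m) ℂ) : ℝ :=
  fnorm (mlog ((msqrt A)⁻¹ * B * (msqrt A)⁻¹))

/-- The Loewner order: `A ≤ B` iff `B - A` is positive semidefinite. -/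
def Loewner {m : ℕ} (A B : Matrix (Fin m) (Fin m) ℂ) : Prop :=
  (B - A).PosSemidef

section CStarAlgebra

open CFC Filter Topology
open scoped Ring

variable {𝒜 : Type*} [CStarAlgebra 𝒜] [PartialOrder 𝒜] [StarOrderedRing 𝒜]

lemma continuousOn_rpow_spectrum {a : 𝒜} (ha : IsStrictlyPositive a) (s : ℝ) :
    ContinuousOn (fun x : ℝ ↦ x ^ s) (spectrum ℝ a) := fun x hx ↦
  (Real.continuousAt_rpow_const x s (.inl (ha.spectrum_pos hx).ne')).continuousWithinAt

lemma continuousOn_log_spectrum {a : 𝒜} (ha : IsStrictlyPositive a) :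
    ContinuousOn Real.log (spectrum ℝ a) := fun _ hx ↦
  (Real.continuousAt_log (ha.spectrum_pos hx).ne').continuousWithinAt

lemma spectrum_subset_Ici_of_norm_sub_le {a b : 𝒜} {c : ℝ} (ha : algebraMap ℝ 𝒜 (2 * c) ≤ a)
    (hb : IsSelfAdjoint b) (h : ‖b - a‖ ≤ c) : spectrum ℝ b ⊆ Set.Ici c := by
  have ha_sa : IsSelfAdjoint a := .of_ge ha (.algebraMap 𝒜 (.all _))
  have hsub : a - b ≤ algebraMap ℝ 𝒜 c :=
    (ha_sa.sub hb).le_algebraMap_norm_self.trans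
      (algebraMap_mono 𝒜 ((norm_sub_rev a b).trans_le h))
  refine (algebraMap_le_iff_le_spectrum (a := b) hb).1 ?_
  calc algebraMap ℝ 𝒜 c = algebraMap ℝ 𝒜 (2 * c) - algebraMap ℝ 𝒜 c := by
        rw [← map_sub, two_mul, add_sub_cancel_right]
    _ ≤ a - (a - b) := sub_le_sub ha hsub
    _ = b := sub_sub_cancel a b

lemma ringInverse_rpow {a : 𝒜} (ha : IsStrictlyPositive a) (s : ℝ) : a⁻¹ʳ ^ s = a ^ (-s) := by
  rw [inverse_eq_rpow_neg_one ha, rpow_rpow a _ _ (by norm_num) ha, neg_one_mul]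

lemma smul_rpow {a : 𝒜} (ha : IsStrictlyPositive a) {r : ℝ} (hr : 0 < r) (s : ℝ) :
    (r • a) ^ s = r ^ s • a ^ s := by
  have hra : r • a = cfc (fun x : ℝ ↦ r • x) a := by
    rw [cfc_smul r (fun x : ℝ ↦ x) a, cfc_id' ℝ a ha.isSelfAdjoint]
  rw [hra, cfc_rpow (fun x hx ↦ by simpa using mul_pos hr (ha.spectrum_pos hx))
    (by fun_prop) ha.isSelfAdjoint, rpow_eq_cfc_real ha.nonneg,
    ← cfc_smul _ _ _ (continuousOn_rpow_spectrum ha s)]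
  exact cfc_congr fun x hx ↦ by simp [Real.mul_rpow hr.le (ha.spectrum_pos hx).le]

lemma unitary_conj_rpow (u : unitary 𝒜) {a : 𝒜} (ha : IsStrictlyPositive a) (s : ℝ) :
    (u * a * star u : 𝒜) ^ s = u * a ^ s * star u := by
  have hconj : IsStrictlyPositive (u * a * star u : 𝒜) :=
    (Unitary.isUnit_coe.isStrictlyPositive_star_right_conjugate_iff).2 ha
  have hcont : Continuous (Unitary.conjStarAlgAut ℂ 𝒜 u) :=
    show Continuous fun x : 𝒜 ↦ (u * x * star u : 𝒜) by fun_prop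
  rw [rpow_eq_cfc_real hconj.nonneg, rpow_eq_cfc_real ha.nonneg]
  simpa using (StarAlgHomClass.map_cfc (S := ℂ) (Unitary.conjStarAlgAut ℂ 𝒜 u)
    (fun x : ℝ ↦ x ^ s) a (continuousOn_rpow_spectrum ha s) hcont ha.isSelfAdjoint
    hconj.isSelfAdjoint).symm

/- The unitary part `T (T* T)^{-1/2}` of the polar decomposition of `T` conjugates `T* T` to
`T T*`. -/
lemma mul_star_self_rpow {T : 𝒜} (hT : IsUnit T) (s : ℝ) :
    (T * star T) ^ s = T * (star T * T) ^ (s - 1) * star T := by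
  have hP : IsStrictlyPositive (star T * T) := by
    simpa using hT.isStrictlyPositive_star_left_conjugate_iff.2 (isStrictlyPositive_one (A := 𝒜))
  set P := star T * T with hP_def
  set Q := P ^ (-(1 / 2) : ℝ)
  have hQ : IsStrictlyPositive Q := .rpow P _ hP
  have hQQ (x : ℝ) : Q * P ^ x * Q = P ^ (x - 1) := by
    rw [← rpow_add hP.isUnit, ← rpow_add hP.isUnit]; ring_nf
  have hstar : star (T * Q) = Q * star T := by rw [star_mul, hQ.isSelfAdjoint.star_eq]
  have hu : T * Q ∈ unitary 𝒜 := by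
    rw [(hT.mul hQ.isUnit).mem_unitary_iff_star_mul_self, hstar]
    calc Q * star T * (T * Q) = Q * P * Q := by simp only [hP_def, mul_assoc]
      _ = 1 := conjugate_rpow_neg_one_half P
  have hconj (Y : 𝒜) : T * Q * Y * star (T * Q) = T * (Q * Y * Q) * star T := by
    simp only [hstar, mul_assoc]
  have hTT : T * star T = T * Q * P * star (T * Q) := by
    rw [hconj, conjugate_rpow_neg_one_half P, mul_one]
  calc (T * star T) ^ s = (T * Q * P * star (T * Q)) ^ s := by rw [hTT]
    _ = T * Q * P ^ s * star (T * Q) := unitary_conj_rpow ⟨T * Q, hu⟩ hP s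
    _ = T * P ^ (s - 1) * star T := by rw [hconj, hQQ]

lemma conjSqrt_rpow {X Y : 𝒜} (hX : IsStrictlyPositive X) (hY : IsStrictlyPositive Y) (s : ℝ) :
    conjSqrt X Y ^ s = conjSqrt X (conjSqrt Y (conjSqrt Y X ^ (s - 1))) := by
  have hstar : star (sqrt X * sqrt Y) = sqrt Y * sqrt X := by
    rw [star_mul, hX.sqrt.isSelfAdjoint.star_eq, hY.sqrt.isSelfAdjoint.star_eq]
  have hmul {a b : 𝒜} (ha : IsStrictlyPositive a) :
      sqrt b * sqrt a * (sqrt a * sqrt b) = conjSqrt b a := by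
    rw [conjSqrt_apply, mul_assoc, ← mul_assoc (sqrt a), sqrt_mul_sqrt_self a, mul_assoc]
  have h := mul_star_self_rpow (hX.sqrt.isUnit.mul hY.sqrt.isUnit) s
  rw [hstar, hmul hY, hmul hX] at h
  simpa only [conjSqrt_apply, mul_assoc] using h

/-- The weighted geometric mean `X #ₜ A = X^{1/2} (X^{-1/2} A X^{-1/2})ᵗ X^{1/2}` of strictly
positive elements, which moves from `X` to `A` as `t` goes from `0` to `1`. -/
noncomputable def geoMean (t : ℝ) (X A : 𝒜) : 𝒜 := conjSqrt X (conjSqrt X⁻¹ʳ A ^ t)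

lemma geoMean_swap {X A : 𝒜} (hX : IsStrictlyPositive X) (hA : IsStrictlyPositive A) (t : ℝ) :
    geoMean t X A = geoMean (1 - t) A X := by
  have hinv : conjSqrt A X⁻¹ʳ = (conjSqrt A⁻¹ʳ X)⁻¹ʳ := by
    rw [ringInverse_conjSqrt _ _ hA.ringInverse, Ring.inverse_inverse hA.isUnit]
  have hAX : IsStrictlyPositive (conjSqrt A⁻¹ʳ X) :=
    (isStrictlyPositive_conjSqrt_iff _ _ hA.ringInverse).2 hX
  rw [geoMean, geoMean, conjSqrt_rpow hX.ringInverse hA, conjSqrt_conjSqrt_ringInverse X, hinv,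
    ringInverse_rpow hAX, neg_sub]

lemma geoMean_mono_right (X : 𝒜) {A B : 𝒜} (h : A ≤ B) {t : ℝ} (ht : t ∈ Set.Icc (0 : ℝ) 1) :
    geoMean t X A ≤ geoMean t X B :=
  conjSqrt_le_conjSqrt (rpow_le_rpow ht (conjSqrt_le_conjSqrt h))

lemma geoMean_mono_left {X Z A : 𝒜} (hX : IsStrictlyPositive X) (hA : IsStrictlyPositive A)
    (h : X ≤ Z) {t : ℝ} (ht : t ∈ Set.Icc (0 : ℝ) 1) : geoMean t X A ≤ geoMean t Z A := by
  rw [geoMean_swap hX hA, geoMean_swap (hX.of_le h) hA]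
  exact geoMean_mono_right A h ⟨by linarith [ht.2], by linarith [ht.1]⟩

lemma geoMean_smul_left {X A : 𝒜} (hX : IsStrictlyPositive X) (hA : IsStrictlyPositive A)
    {r : ℝ} (hr : 0 < r) (t : ℝ) : geoMean t (r • X) A = r ^ (1 - t) • geoMean t X A := by
  have hAX : IsStrictlyPositive (conjSqrt A⁻¹ʳ X) :=
    (isStrictlyPositive_conjSqrt_iff _ _ hA.ringInverse).2 hX
  rw [geoMean_swap (hX.smul hr) hA, geoMean_swap hX hA, geoMean, map_smul, smul_rpow hAX hr,
    map_smul, geoMean]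

lemma one_add_smul_log_le_rpow {a : 𝒜} (ha : IsStrictlyPositive a) (t : ℝ) :
    1 + t • log a ≤ a ^ t := by
  have hlog := continuousOn_log_spectrum ha
  have hcfc : 1 + t • log a = cfc (fun x : ℝ ↦ 1 + t • Real.log x) a := by
    rw [cfc_const_add 1 (fun x : ℝ ↦ t • Real.log x) a (hlog.const_smul t) ha.isSelfAdjoint,
      cfc_smul t Real.log a hlog, log, map_one]
  rw [hcfc, rpow_eq_cfc_real ha.nonneg]
  refine cfc_mono (fun x hx ↦ ?_) (continuousOn_const.add (hlog.const_smul t))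
    (continuousOn_rpow_spectrum ha t)
  rw [Real.rpow_def_of_pos (ha.spectrum_pos hx), smul_eq_mul]
  linarith [Real.add_one_le_exp (Real.log x * t)]

lemma tendsto_inv_smul_rpow_sub_one {a : 𝒜} (ha : IsStrictlyPositive a) :
    Tendsto (fun t : ℝ ↦ t⁻¹ • (a ^ t - 1)) (𝓝[>] 0) (𝓝 (log a)) := by
  refine (tendsto_cfc_rpow_sub_one_log ha).congr fun t ↦ ?_
  have hpow := continuousOn_rpow_spectrum ha t
  simp only [← smul_eq_mul]
  rw [cfc_smul _ (fun x : ℝ ↦ x ^ t - 1) a (hpow.sub continuousOn_const),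
    cfc_sub _ _ a hpow continuousOn_const, cfc_const_one ℝ a ha.isSelfAdjoint,
    rpow_eq_cfc_real ha.nonneg]

lemma eventually_rpow_le {a : 𝒜} (ha : IsStrictlyPositive a) {ε : ℝ} (hε : 0 < ε) :
    ∀ᶠ t : ℝ in 𝓝[>] 0, a ^ t ≤ 1 + t • log a + (t * ε) • 1 := by
  filter_upwards [Metric.tendsto_nhds.1 (tendsto_inv_smul_rpow_sub_one ha) ε hε,
    self_mem_nhdsWithin] with t ht (ht0 : 0 < t)
  have hsa : IsSelfAdjoint (t⁻¹ • (a ^ t - 1) - log a) :=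
    (IsSelfAdjoint.smul (.all _) (rpow_nonneg.isSelfAdjoint.sub (.one 𝒜))).sub .log
  have hquot : t⁻¹ • (a ^ t - 1) - log a ≤ ε • 1 := by
    rw [← Algebra.algebraMap_eq_smul_one]
    refine hsa.le_algebraMap_norm_self.trans (algebraMap_mono 𝒜 ?_)
    exact (dist_eq_norm (t⁻¹ • (a ^ t - 1)) (log a) ▸ ht).le
  calc a ^ t = 1 + t • log a + t • (t⁻¹ • (a ^ t - 1) - log a) := by
        rw [smul_sub, smul_inv_smul₀ ht0.ne']; abel
    _ ≤ 1 + t • log a + t • ε • (1 : 𝒜) := by gcongr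
    _ = 1 + t • log a + (t * ε) • 1 := by rw [smul_smul]

lemma norm_conjSqrt_ringInverse_le_iff {X Z : 𝒜} (hX : 0 ≤ X) (hZ : IsStrictlyPositive Z)
    {r : ℝ} (hr : 0 ≤ r) : ‖conjSqrt Z⁻¹ʳ X‖ ≤ r ↔ X ≤ r • Z := by
  have hnonneg : 0 ≤ conjSqrt Z⁻¹ʳ X := by simpa using conjSqrt_le_conjSqrt (c := Z⁻¹ʳ) hX
  rw [CStarAlgebra.norm_le_iff_le_algebraMap _ hr hnonneg, Algebra.algebraMap_eq_smul_one]
  constructor <;> intro h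
  · simpa [conjSqrt_conjSqrt_ringInverse Z X, conjSqrt_one Z] using
      conjSqrt_le_conjSqrt (c := Z) h
  · simpa [conjSqrt_ringInverse_self Z] using conjSqrt_le_conjSqrt (c := Z⁻¹ʳ) h

lemma rpow_one_sub_mul_one_add_lt {r t : ℝ} (hr : 1 < r) (ht : 0 < t) :
    r ^ (1 - t) * (1 + t * (Real.log r / 2)) < r := by
  have hr0 : 0 < r := by positivity
  have hlt : 1 + t * (Real.log r / 2) < r ^ t := by
    rw [Real.rpow_def_of_pos hr0]
    have := mul_pos ht (Real.log_pos hr)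
    linarith [Real.add_one_le_exp (Real.log r * t)]
  calc r ^ (1 - t) * (1 + t * (Real.log r / 2)) < r ^ (1 - t) * r ^ t := by gcongr
    _ = r := by rw [← Real.rpow_add hr0, sub_add_cancel, Real.rpow_one]

variable {ι : Type*} [Fintype ι]

/-- The left-hand side `∑ wᵢ log (X^{-1/2} Aᵢ X^{-1/2})` of the Karcher equation at `X`. -/
noncomputable def karcherSum (w : ι → ℝ) (A : ι → 𝒜) (X : 𝒜) : 𝒜 :=
  ∑ i, w i • log (conjSqrt X⁻¹ʳ (A i))

variable {w : ι → ℝ} {A B : ι → 𝒜} {X Z : 𝒜}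

lemma le_sum_smul_geoMean (hw : ∀ i, 0 ≤ w i) (hw1 : ∑ i, w i = 1)
    (hA : ∀ i, IsStrictlyPositive (A i)) (hX : IsStrictlyPositive X)
    (hXA : 0 ≤ karcherSum w A X) {t : ℝ} (ht : 0 ≤ t) :
    X ≤ ∑ i, w i • geoMean t X (A i) := by
  have hone : 1 ≤ ∑ i, w i • conjSqrt X⁻¹ʳ (A i) ^ t :=
    calc 1 ≤ 1 + t • karcherSum w A X := le_add_of_nonneg_right (smul_nonneg ht hXA)
      _ = ∑ i, w i • (1 + t • log (conjSqrt X⁻¹ʳ (A i))) := by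
        simp only [karcherSum, smul_add, Finset.sum_add_distrib, ← Finset.sum_smul, hw1, one_smul,
          smul_comm _ t, Finset.smul_sum]
      _ ≤ ∑ i, w i • conjSqrt X⁻¹ʳ (A i) ^ t := Finset.sum_le_sum fun i _ ↦
        smul_le_smul_of_nonneg_left (one_add_smul_log_le_rpow
          ((isStrictlyPositive_conjSqrt_iff _ _ hX.ringInverse).2 (hA i)) t) (hw i)
  simpa [geoMean, conjSqrt_one X] using conjSqrt_le_conjSqrt (c := X) hone

lemma eventually_sum_smul_geoMean_le (hw : ∀ i, 0 ≤ w i) (hw1 : ∑ i, w i = 1)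
    (hB : ∀ i, IsStrictlyPositive (B i)) (hZ : IsStrictlyPositive Z)
    (hZB : karcherSum w B Z ≤ 0) {ε : ℝ} (hε : 0 < ε) :
    ∀ᶠ t : ℝ in 𝓝[>] 0, ∑ i, w i • geoMean t Z (B i) ≤ (1 + t * ε) • Z := by
  have hrpow : ∀ᶠ t : ℝ in 𝓝[>] 0, ∀ i, conjSqrt Z⁻¹ʳ (B i) ^ t ≤
      1 + t • log (conjSqrt Z⁻¹ʳ (B i)) + (t * ε) • 1 := eventually_all.2 fun i ↦
    eventually_rpow_le ((isStrictlyPositive_conjSqrt_iff _ _ hZ.ringInverse).2 (hB i)) hε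
  filter_upwards [hrpow, self_mem_nhdsWithin] with t ht (ht0 : 0 < t)
  have hone : ∑ i, w i • conjSqrt Z⁻¹ʳ (B i) ^ t ≤ (1 + t * ε) • 1 :=
    calc ∑ i, w i • conjSqrt Z⁻¹ʳ (B i) ^ t
        ≤ ∑ i, w i • (1 + t • log (conjSqrt Z⁻¹ʳ (B i)) + (t * ε) • 1) :=
          Finset.sum_le_sum fun i _ ↦ smul_le_smul_of_nonneg_left (ht i) (hw i)
      _ = (1 + t * ε) • 1 + t • karcherSum w B Z := by
        simp only [karcherSum, smul_add, Finset.sum_add_distrib, ← Finset.sum_smul, hw1, one_smul,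
          smul_comm _ t, Finset.smul_sum, add_smul]
        abel
      _ ≤ (1 + t * ε) • 1 :=
        add_le_of_nonpos_right (smul_nonpos_of_nonneg_of_nonpos ht0.le hZB)
  simpa [geoMean, conjSqrt_one Z] using conjSqrt_le_conjSqrt (c := Z) hone

lemma le_smul_of_le_sum_geoMean (hw : ∀ i, 0 ≤ w i)
    (hA : ∀ i, IsStrictlyPositive (A i)) (hAB : ∀ i, A i ≤ B i)
    (hX : IsStrictlyPositive X) (hZ : IsStrictlyPositive Z) {r c t : ℝ} (hr : 0 < r)
    (ht : t ∈ Set.Icc (0 : ℝ) 1) (hXZ : X ≤ r • Z) (hXA : X ≤ ∑ i, w i • geoMean t X (A i))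
    (hZB : ∑ i, w i • geoMean t Z (B i) ≤ c • Z) :
    X ≤ (r ^ (1 - t) * c) • Z :=
  calc X ≤ ∑ i, w i • geoMean t X (A i) := hXA
    _ ≤ ∑ i, w i • geoMean t (r • Z) (B i) := Finset.sum_le_sum fun i _ ↦
      smul_le_smul_of_nonneg_left ((geoMean_mono_left hX (hA i) hXZ ht).trans
        (geoMean_mono_right _ (hAB i) ht)) (hw i)
    _ = r ^ (1 - t) • ∑ i, w i • geoMean t Z (B i) := by
      simp only [geoMean_smul_left hZ ((hA _).of_le (hAB _)) hr, smul_comm _ (r ^ (1 - t)),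
        ← Finset.smul_sum]
    _ ≤ r ^ (1 - t) • c • Z := smul_le_smul_of_nonneg_left hZB (by positivity)
    _ = (r ^ (1 - t) * c) • Z := smul_smul ..

/- If the least `r` with `X ≤ r • Z` were larger than `1`, then comparing the two families of
geometric means at small `t` would give `X ≤ r' • Z` with `r' < r`. -/
theorem le_of_karcherSum_nonneg_of_karcherSum_nonpos
    (hw : ∀ i, 0 ≤ w i) (hw1 : ∑ i, w i = 1)
    (hA : ∀ i, IsStrictlyPositive (A i)) (hAB : ∀ i, A i ≤ B i)
    (hX : IsStrictlyPositive X) (hZ : IsStrictlyPositive Z)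
    (hXA : 0 ≤ karcherSum w A X) (hZB : karcherSum w B Z ≤ 0) : X ≤ Z := by
  set r := ‖conjSqrt Z⁻¹ʳ X‖
  have hleast {c : ℝ} (hc : 0 ≤ c) : r ≤ c ↔ X ≤ c • Z :=
    norm_conjSqrt_ringInverse_le_iff hX.nonneg hZ hc
  suffices hr1 : r ≤ 1 by simpa using (hleast zero_le_one).1 hr1
  by_contra! hr1
  have hr0 : 0 < r := zero_lt_one.trans hr1
  have hlog : 0 < Real.log r / 2 := half_pos (Real.log_pos hr1)
  obtain ⟨t, ⟨hZt, ht1⟩, ht0⟩ := (((eventually_sum_smul_geoMean_le hw hw1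
    (fun i ↦ (hA i).of_le (hAB i)) hZ hZB hlog).and
    (nhdsWithin_le_nhds (Iic_mem_nhds one_pos))).and self_mem_nhdsWithin).exists
  have ht0 : 0 < t := ht0
  have hXZ : X ≤ (r ^ (1 - t) * (1 + t * (Real.log r / 2))) • Z :=
    le_smul_of_le_sum_geoMean hw hA hAB hX hZ hr0 ⟨ht0.le, ht1⟩ ((hleast hr0.le).1 le_rfl)
      (le_sum_smul_geoMean hw hw1 hA hX hXA ht0.le) hZt
  exact (rpow_one_sub_mul_one_add_lt hr1 ht0).not_ge ((hleast (by positivity)).2 hXZ)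

end CStarAlgebra

section Trace

open scoped Topology MatrixOrder Matrix.Norms.L2Operator

variable {n 𝕜 : Type*} [Fintype n] [RCLike 𝕜]

/-- The functional `M ↦ Re (Tr M)`, as a continuous `ℝ`-linear map. -/
noncomputable def reTrace : Matrix n n 𝕜 →L[ℝ] ℝ :=
  LinearMap.toContinuousLinearMap (RCLike.reLm ∘ₗ traceLinearMap n ℝ 𝕜)

lemma reTrace_apply (M : Matrix n n 𝕜) : reTrace M = RCLike.re M.trace := rfl

lemma reTrace_mul_comm (M N : Matrix n n 𝕜) : reTrace (M * N) = reTrace (N * M) := by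
  rw [reTrace_apply, trace_mul_comm, reTrace_apply]

lemma reTrace_conjTranspose_mul_self_eq_zero_iff {M : Matrix n n 𝕜} :
    reTrace (Mᴴ * M) = 0 ↔ M = 0 := by
  have hnonneg := RCLike.nonneg_iff.1 (posSemidef_conjTranspose_mul_self M).trace_nonneg
  rw [← trace_conjTranspose_mul_self_eq_zero_iff, reTrace_apply, RCLike.ext_iff (K := 𝕜),
    map_zero, map_zero, and_iff_left hnonneg.2]

variable [DecidableEq n]

lemma continuousOn_spectrum (M : Matrix n n 𝕜) (f : ℝ → ℝ) : ContinuousOn f (spectrum ℝ M) :=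
  finite_real_spectrum.continuousOn f

lemma cfc_mul_cfc (M : Matrix n n 𝕜) (f g : ℝ → ℝ) :
    cfc f M * cfc g M = cfc (fun x ↦ f x * g x) M :=
  (cfc_mul f g M (continuousOn_spectrum M f) (continuousOn_spectrum M g)).symm

lemma reTrace_cfc_eq_of_charpoly_eq {M N : Matrix n n 𝕜} (hM : M.IsHermitian) (hN : N.IsHermitian)
    (h : M.charpoly = N.charpoly) (f : ℝ → ℝ) : reTrace (cfc f M) = reTrace (cfc f N) := by
  rw [reTrace_apply, reTrace_apply, trace_eq_neg_charpoly_nextCoeff,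
    trace_eq_neg_charpoly_nextCoeff, hM.charpoly_cfc_eq, hN.charpoly_cfc_eq,
    (hM.eigenvalues_eq_eigenvalues_iff hN).2 h]

lemma trace_diagonal_mul_mul_diagonal_mul_conjTranspose {m : Type*} [Fintype m] [DecidableEq m]
    (d : m → 𝕜) (e : n → 𝕜) (W : Matrix m n 𝕜) :
    (diagonal d * W * diagonal e * Wᴴ).trace = ∑ j, ∑ k, d j * e k * (‖W j k‖ ^ 2 : ℝ) := by
  simp only [trace, diag_apply, mul_apply (N := Wᴴ), mul_diagonal, diagonal_mul,
    conjTranspose_apply]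
  refine Finset.sum_congr rfl fun j _ ↦ Finset.sum_congr rfl fun k _ ↦ ?_
  rw [RCLike.star_def, RCLike.ofReal_pow, ← RCLike.mul_conj]
  ring

/-- The squared modulus of the inner product of the `j`-th eigenvector of `M` with the `k`-th
eigenvector of `N`. -/
noncomputable def eigenWeight {M N : Matrix n n 𝕜} (hM : M.IsHermitian) (hN : N.IsHermitian)
    (j k : n) : ℝ :=
  ‖(star (hM.eigenvectorUnitary : Matrix n n 𝕜) * hN.eigenvectorUnitary) j k‖ ^ 2

lemma reTrace_cfc_mul_cfc {M N : Matrix n n 𝕜} (hM : M.IsHermitian) (hN : N.IsHermitian)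
    (f g : ℝ → ℝ) :
    reTrace (cfc f M * cfc g N) =
      ∑ j, ∑ k, f (hM.eigenvalues j) * g (hN.eigenvalues k) * eigenWeight hM hN j k := by
  set U := (hM.eigenvectorUnitary : Matrix n n 𝕜)
  set V := (hN.eigenvectorUnitary : Matrix n n 𝕜)
  have hcfcM : cfc f M = U * diagonal (RCLike.ofReal ∘ f ∘ hM.eigenvalues) * star U := by
    rw [hM.cfc_eq, IsHermitian.cfc, Unitary.conjStarAlgAut_apply]
  have hcfcN : cfc g N = V * diagonal (RCLike.ofReal ∘ g ∘ hN.eigenvalues) * star V := by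
    rw [hN.cfc_eq, IsHermitian.cfc, Unitary.conjStarAlgAut_apply]
  have htrace : (cfc f M * cfc g N).trace =
      ∑ j, ∑ k, (f (hM.eigenvalues j) : 𝕜) * g (hN.eigenvalues k) * eigenWeight hM hN j k := by
    rw [hcfcM, hcfcN, mul_assoc, mul_assoc, trace_mul_comm]
    have h := trace_diagonal_mul_mul_diagonal_mul_conjTranspose (RCLike.ofReal ∘ f ∘ hM.eigenvalues)
      (RCLike.ofReal ∘ g ∘ hN.eigenvalues) (star U * V)
    simp only [← star_eq_conjTranspose, star_mul, star_star, mul_assoc] at h ⊢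
    exact h
  rw [reTrace_apply, htrace]
  simp only [map_sum, ← RCLike.ofReal_mul, RCLike.ofReal_re]

lemma reTrace_cfc_sub_sub {M N : Matrix n n 𝕜} (hM : M.IsHermitian) (hN : N.IsHermitian)
    (f f' : ℝ → ℝ) :
    reTrace (cfc f N) - reTrace (cfc f M) - reTrace (cfc f' M * (N - M)) =
      ∑ j, ∑ k, (f (hN.eigenvalues k) - f (hM.eigenvalues j) - f' (hM.eigenvalues j) *
        (hN.eigenvalues k - hM.eigenvalues j)) * eigenWeight hM hN j k := by
  have hpair := reTrace_cfc_mul_cfc hM hN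
  have hM1 : cfc (fun _ : ℝ ↦ (1 : ℝ)) M = 1 := cfc_const_one ℝ M hM
  have hN1 : cfc (fun _ : ℝ ↦ (1 : ℝ)) N = 1 := cfc_const_one ℝ N hN
  have hM_eq (g : ℝ → ℝ) : reTrace (cfc g M) = ∑ j, ∑ k,
      g (hM.eigenvalues j) * eigenWeight hM hN j k := by
    simpa [hN1] using hpair g fun _ ↦ 1
  have hN_eq (g : ℝ → ℝ) : reTrace (cfc g N) = ∑ j, ∑ k,
      g (hN.eigenvalues k) * eigenWeight hM hN j k := by
    simpa [hM1] using hpair (fun _ ↦ 1) g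
  have hMid : cfc (fun x : ℝ ↦ x) M = M := cfc_id' ℝ M hM
  have hNid : cfc (fun x : ℝ ↦ x) N = N := cfc_id' ℝ N hN
  have hfN := hNid ▸ hpair f' fun x ↦ x
  have hfM := hM_eq fun x ↦ f' x * x
  rw [← cfc_mul_cfc, hMid] at hfM
  rw [mul_sub, map_sub, hfN, hfM, hM_eq, hN_eq]
  simp only [← Finset.sum_sub_distrib]
  exact Finset.sum_congr rfl fun j _ ↦ Finset.sum_congr rfl fun k _ ↦ by ring

lemma reTrace_sub_mul_sub {M N : Matrix n n 𝕜} (hM : M.IsHermitian) (hN : N.IsHermitian) :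
    reTrace ((N - M) * (N - M)) =
      ∑ j, ∑ k, (hN.eigenvalues k - hM.eigenvalues j) ^ 2 * eigenWeight hM hN j k := by
  have h := reTrace_cfc_sub_sub hM hN (fun x ↦ x ^ 2) fun x ↦ 2 * x
  rw [cfc_pow_id .., cfc_pow_id .., cfc_const_mul_id .., smul_mul_assoc, map_smul] at h
  calc reTrace ((N - M) * (N - M)) =
      reTrace (N ^ 2) - reTrace (M ^ 2) - (2 : ℝ) • reTrace (M * (N - M)) := by
        simp only [sub_mul, mul_sub, map_sub, reTrace_mul_comm N M, sq, smul_eq_mul]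
        ring
    _ = _ := h.trans (Finset.sum_congr rfl fun j _ ↦ Finset.sum_congr rfl fun k _ ↦ by ring)

/- The inequality between the traces is the scalar inequality, summed over all pairs of
eigenvalues with the nonnegative weights `eigenWeight`, as in the proof of Klein's inequality. -/
theorem abs_reTrace_cfc_sub_sub_le {M N : Matrix n n 𝕜} (hM : M.IsHermitian)
    (hN : N.IsHermitian) {f f' : ℝ → ℝ} {C : ℝ} (hf : ∀ x ∈ spectrum ℝ M, ∀ y ∈ spectrum ℝ N,
      |f y - f x - f' x * (y - x)| ≤ C * (y - x) ^ 2) :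
    |reTrace (cfc f N) - reTrace (cfc f M) - reTrace (cfc f' M * (N - M))| ≤
      C * reTrace ((N - M) * (N - M)) := by
  rw [reTrace_cfc_sub_sub hM hN, reTrace_sub_mul_sub hM hN, Finset.mul_sum]
  simp only [Finset.mul_sum]
  refine (Finset.abs_sum_le_sum_abs _ _).trans (Finset.sum_le_sum fun j _ ↦
    (Finset.abs_sum_le_sum_abs _ _).trans (Finset.sum_le_sum fun k _ ↦ ?_))
  have hweight : 0 ≤ eigenWeight hM hN j k := sq_nonneg _
  rw [abs_mul, abs_of_nonneg hweight, ← mul_assoc]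
  exact mul_le_mul_of_nonneg_right (hf _ (hM.eigenvalues_mem_spectrum_real j) _
    (hN.eigenvalues_mem_spectrum_real k)) hweight

theorem hasFDerivWithinAt_reTrace_cfc {S : Set ℝ} {M : Matrix n n ℂ} (hM : M.IsHermitian)
    {f f' : ℝ → ℝ} {C : ℝ}
    (hf : ∀ x ∈ spectrum ℝ M, ∀ y ∈ S, |f y - f x - f' x * (y - x)| ≤ C * (y - x) ^ 2) :
    HasFDerivWithinAt (fun N ↦ reTrace (cfc f N))
      (reTrace ∘L ContinuousLinearMap.mul ℝ (Matrix n n ℂ) (cfc f' M))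
      {N | N.IsHermitian ∧ spectrum ℝ N ⊆ S} M := by
  set L := reTrace ∘L ContinuousLinearMap.mul ℝ (Matrix n n ℂ) (cfc f' M)
  set K := ‖(reTrace : Matrix n n ℂ →L[ℝ] ℝ)‖
  have hrem : (fun N ↦ reTrace (cfc f N) - reTrace (cfc f M) - L (N - M))
      =O[𝓝[{N | N.IsHermitian ∧ spectrum ℝ N ⊆ S}] M] fun N ↦ ‖N - M‖ ^ 2 := by
    refine .of_bound (|C| * K) ?_
    filter_upwards [self_mem_nhdsWithin] with N ⟨hN, hNS⟩
    rw [Real.norm_eq_abs, norm_pow, norm_norm]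
    calc |reTrace (cfc f N) - reTrace (cfc f M) - reTrace (cfc f' M * (N - M))|
        ≤ C * reTrace ((N - M) * (N - M)) :=
          abs_reTrace_cfc_sub_sub_le hM hN fun x hx y hy ↦ hf x hx y (hNS hy)
      _ ≤ |C| * |reTrace ((N - M) * (N - M))| := (le_abs_self _).trans (abs_mul _ _).le
      _ ≤ |C| * (K * (‖N - M‖ * ‖N - M‖)) := by
          gcongr
          exact reTrace.le_opNorm_of_le (norm_mul_le (N - M) (N - M))
      _ = |C| * K * ‖N - M‖ ^ 2 := by ring
  exact .of_isLittleO (hrem.trans_isLittleO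
    ((Asymptotics.isLittleO_pow_sub_sub M one_lt_two).mono nhdsWithin_le_nhds))

lemma sq_log_le_add_inv {r : ℝ} (hr : 0 < r) : Real.log r ^ 2 ≤ r - 2 + r⁻¹ := by
  have hcosh : Real.cosh (Real.log r) = 2 * Real.sinh (Real.log r / 2) ^ 2 + 1 := by
    rw [← mul_div_cancel₀ (Real.log r) (two_ne_zero' ℝ), mul_div_assoc, Real.cosh_two_mul,
      Real.cosh_sq]
    ring_nf
  have hsinh : (Real.log r / 2) ^ 2 ≤ Real.sinh (Real.log r / 2) ^ 2 := by
    rw [sq_le_sq, Real.abs_sinh]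
    exact Real.self_le_sinh_iff.2 (abs_nonneg _)
  linarith [Real.cosh_log hr]

lemma abs_sq_log_sub_sub_le {x y : ℝ} (hx : 0 < x) (hy : 0 < y) :
    |Real.log y ^ 2 - Real.log x ^ 2 - 2 * Real.log x / x * (y - x)| ≤
      (1 + 2 * |Real.log x|) / (x * y) * (y - x) ^ 2 := by
  obtain ⟨r, hr, rfl⟩ : ∃ r, 0 < r ∧ y = x * r := ⟨y / x, by positivity, by field_simp⟩
  have hlhs : Real.log (x * r) ^ 2 - Real.log x ^ 2 - 2 * Real.log x / x * (x * r - x) =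
      Real.log r ^ 2 + 2 * Real.log x * (Real.log r - (r - 1)) := by
    rw [Real.log_mul hx.ne' hr.ne']
    field_simp
    ring
  have hrhs : (1 + 2 * |Real.log x|) / (x * (x * r)) * (x * r - x) ^ 2 =
      (r - 2 + r⁻¹) + 2 * |Real.log x| * (r - 2 + r⁻¹) := by
    field_simp
    ring
  have hlog : |Real.log r - (r - 1)| ≤ r - 2 + r⁻¹ := by
    have hinv := Real.log_le_sub_one_of_pos (inv_pos.2 hr)
    rw [Real.log_inv] at hinv
    rw [abs_of_nonpos (by linarith [Real.log_le_sub_one_of_pos hr])]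
    linarith
  rw [hlhs, hrhs]
  refine (abs_add_le _ _).trans (add_le_add ?_ ?_)
  · rw [abs_sq]
    exact sq_log_le_add_inv hr
  · rw [abs_mul, abs_mul, abs_two]
    gcongr

/-- The functional `Tr log² M`; at `M = X^{-1/2} A X^{-1/2}` it is the squared Riemannian distance
of `X` and `A`. -/
noncomputable def traceSqLog (M : Matrix n n ℂ) : ℝ := reTrace (cfc (fun x ↦ Real.log x ^ 2) M)

theorem hasFDerivWithinAt_traceSqLog {M : Matrix n n ℂ} (hM : IsStrictlyPositive M) :
    HasFDerivWithinAt traceSqLog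
      (reTrace ∘L ContinuousLinearMap.mul ℝ (Matrix n n ℂ) (cfc (fun x ↦ 2 * Real.log x / x) M))
      {N | N.IsHermitian} M := by
  have hMsa : M.IsHermitian := hM.isSelfAdjoint
  obtain ⟨c, hc, hcM⟩ : ∃ c > 0, algebraMap ℝ _ (2 * c) ≤ M := by
    obtain _ | _ := subsingleton_or_nontrivial (Matrix n n ℂ)
    · exact ⟨1, one_pos, (Subsingleton.elim _ _).le⟩
    obtain ⟨c, hc, hcM⟩ := (CFC.exists_pos_algebraMap_le_iff hMsa).2 fun x hx ↦ hM.spectrum_pos hx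
    exact ⟨c / 2, half_pos hc, by rwa [mul_div_cancel₀ c two_ne_zero]⟩
  obtain ⟨C, hC⟩ := (finite_real_spectrum (A := M)).image
    (fun x ↦ (1 + 2 * |Real.log x|) / (x * c)) |>.bddAbove
  refine (hasFDerivWithinAt_reTrace_cfc (S := Set.Ici c) (C := C) hMsa ?_).mono_of_mem_nhdsWithin ?_
  · intro x hx y (hy : c ≤ y)
    have hx0 : 0 < x := hM.spectrum_pos hx
    calc |Real.log y ^ 2 - Real.log x ^ 2 - 2 * Real.log x / x * (y - x)|
        ≤ (1 + 2 * |Real.log x|) / (x * y) * (y - x) ^ 2 :=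
          abs_sq_log_sub_sub_le hx0 (hc.trans_le hy)
      _ ≤ (1 + 2 * |Real.log x|) / (x * c) * (y - x) ^ 2 := by gcongr
      _ ≤ C * (y - x) ^ 2 := by
          gcongr
          exact hC (Set.mem_image_of_mem _ hx)
  · filter_upwards [self_mem_nhdsWithin, nhdsWithin_le_nhds (Metric.closedBall_mem_nhds M hc)]
      with N hN hNM
    exact ⟨hN, spectrum_subset_Ici_of_norm_sub_le hcM hN (mem_closedBall_iff_norm.1 hNM)⟩

end Trace

section Distance

open CFC
open scoped Ring MatrixOrder Matrix.Norms.L2Operator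

variable {n : Type*} [Fintype n] [DecidableEq n]

lemma charpoly_conjSqrt {P : Matrix n n ℂ} (hP : 0 ≤ P) (Q : Matrix n n ℂ) :
    (conjSqrt P Q).charpoly = (P * Q).charpoly := by
  rw [conjSqrt_apply, charpoly_mul_comm, ← mul_assoc, sqrt_mul_sqrt_self P]

lemma charpoly_conjSqrt_mul (P Q R : Matrix n n ℂ) :
    (conjSqrt P Q * R).charpoly = (Q * conjSqrt P R).charpoly := by
  simp only [conjSqrt_apply, mul_assoc]
  rw [charpoly_mul_comm]
  simp only [mul_assoc]

lemma isHermitian_conjSqrt (P : Matrix n n ℂ) {Q : Matrix n n ℂ} (hQ : Q.IsHermitian) :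
    (conjSqrt P Q).IsHermitian :=
  IsSelfAdjoint.conjugate_self hQ (sqrt_nonneg P).isSelfAdjoint

lemma traceSqLog_conjSqrt_ringInverse_conjSqrt {X A E : Matrix n n ℂ} (hX : IsStrictlyPositive X)
    (hA : IsStrictlyPositive A) (hE : IsStrictlyPositive E) :
    traceSqLog (conjSqrt (conjSqrt X E⁻¹ʳ)⁻¹ʳ A) = traceSqLog (conjSqrt (conjSqrt X⁻¹ʳ A) E) := by
  have hXA : IsStrictlyPositive (conjSqrt X⁻¹ʳ A) :=
    (isStrictlyPositive_conjSqrt_iff _ _ hX.ringInverse).2 hA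
  have hXE : IsStrictlyPositive (conjSqrt X⁻¹ʳ E) :=
    (isStrictlyPositive_conjSqrt_iff _ _ hX.ringInverse).2 hE
  refine reTrace_cfc_eq_of_charpoly_eq (isHermitian_conjSqrt _ hA.isSelfAdjoint)
    (isHermitian_conjSqrt _ hE.isSelfAdjoint) ?_ _
  rw [ringInverse_conjSqrt X _ hX, Ring.inverse_inverse hE.isUnit, charpoly_conjSqrt hXE.nonneg,
    charpoly_conjSqrt hXA.nonneg, charpoly_mul_comm _ E, charpoly_conjSqrt_mul]

theorem hasDerivAt_traceSqLog_conjSqrt {M : Matrix n n ℂ} (hM : IsStrictlyPositive M)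
    {E : ℝ → Matrix n n ℂ} {H : Matrix n n ℂ} {s₀ : ℝ} (hE : HasDerivAt E H s₀)
    (hEs₀ : E s₀ = 1) (hEsa : ∀ s, (E s).IsHermitian) :
    HasDerivAt (fun s ↦ traceSqLog (conjSqrt M (E s))) (2 * reTrace (log M * H)) s₀ := by
  set g : ℝ → ℝ := fun x ↦ 2 * Real.log x / x
  have hconj : HasDerivAt (fun s ↦ conjSqrt M (E s)) (conjSqrt M H) s₀ :=
    (conjSqrt M).hasFDerivAt.comp_hasDerivAt s₀ hE
  have hderiv : reTrace (cfc g M * conjSqrt M H) = 2 * reTrace (log M * H) := by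
    have hsqrt : sqrt M * cfc g M * sqrt M = (2 : ℝ) • log M := by
      rw [sqrt_eq_real_sqrt M, cfcₙ_eq_cfc, cfc_mul_cfc, cfc_mul_cfc, log,
        ← cfc_smul _ _ _ (continuousOn_spectrum M Real.log)]
      refine cfc_congr fun x hx ↦ ?_
      have hx0 : 0 < x := hM.spectrum_pos hx
      simp only [g, smul_eq_mul]
      rw [mul_right_comm, Real.mul_self_sqrt hx0.le, mul_div_cancel₀ _ hx0.ne']
    rw [conjSqrt_apply, ← mul_assoc, reTrace_mul_comm, ← mul_assoc, ← mul_assoc, hsqrt,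
      smul_mul_assoc, map_smul, smul_eq_mul]
  rw [← hderiv]
  refine (hasFDerivWithinAt_traceSqLog hM).comp_hasDerivAt_of_eq s₀ hconj
    (.of_forall fun s ↦ isHermitian_conjSqrt M (hEsa s)) ?_
  rw [hEs₀, conjSqrt_one M]

variable {m : ℕ}

lemma matFun_eq_cfc {A : Matrix (Fin m) (Fin m) ℂ} (hA : A.IsHermitian) (f : ℝ → ℝ) :
    matFun f A = cfc f A := by
  rw [matFun, dif_pos hA, hA.cfc_eq, IsHermitian.cfc, Unitary.conjStarAlgAut_apply]
  rfl

lemma msqrt_inv {X : Matrix (Fin m) (Fin m) ℂ} (hX : 0 ≤ X) : (msqrt X)⁻¹ = sqrt X⁻¹ʳ := by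
  rw [nonsing_inv_eq_ringInverse, sqrt_ringInverse, msqrt, matFun_eq_cfc hX.isSelfAdjoint,
    sqrt_eq_real_sqrt X, cfcₙ_eq_cfc]

lemma fnorm_sq (M : Matrix (Fin m) (Fin m) ℂ) : fnorm M ^ 2 = reTrace (Mᴴ * M) :=
  Real.sq_sqrt (Complex.le_def.1 (posSemidef_conjTranspose_mul_self M).trace_nonneg).1

lemma rdist_sq {X A : Matrix (Fin m) (Fin m) ℂ} (hX : 0 ≤ X) (hA : A.IsHermitian) :
    rdist X A ^ 2 = traceSqLog (conjSqrt X⁻¹ʳ A) := by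
  have hlog : (cfc Real.log (conjSqrt X⁻¹ʳ A))ᴴ = cfc Real.log (conjSqrt X⁻¹ʳ A) :=
    IsSelfAdjoint.log (a := conjSqrt X⁻¹ʳ A)
  rw [rdist, fnorm_sq, msqrt_inv hX, ← conjSqrt_apply, mlog,
    matFun_eq_cfc (isHermitian_conjSqrt _ hA), hlog, cfc_mul_cfc, traceSqLog]
  simp only [sq]

variable {ι : Type*} [Fintype ι] {w : ι → ℝ} {A B : ι → Matrix (Fin m) (Fin m) ℂ}
  {X Z : Matrix (Fin m) (Fin m) ℂ}

theorem hasDerivAt_sum_rdist_sq (hA : ∀ i, IsStrictlyPositive (A i)) (hX : IsStrictlyPositive X)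
    {E : ℝ → Matrix (Fin m) (Fin m) ℂ} {H : Matrix (Fin m) (Fin m) ℂ} {s₀ : ℝ}
    (hE : ∀ s, IsStrictlyPositive (E s)) (hEs₀ : E s₀ = 1) (hEH : HasDerivAt E H s₀) :
    HasDerivAt (fun s ↦ ∑ i, w i * rdist (conjSqrt X (E s)⁻¹ʳ) (A i) ^ 2)
      (2 * reTrace (karcherSum w A X * H)) s₀ := by
  have hM (i) : IsStrictlyPositive (conjSqrt X⁻¹ʳ (A i)) :=
    (isStrictlyPositive_conjSqrt_iff _ _ hX.ringInverse).2 (hA i)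
  have hY (s) : IsStrictlyPositive (conjSqrt X (E s)⁻¹ʳ) :=
    (isStrictlyPositive_conjSqrt_iff X _).2 (hE s).ringInverse
  have hrdist (s i) : rdist (conjSqrt X (E s)⁻¹ʳ) (A i) ^ 2 =
      traceSqLog (conjSqrt (conjSqrt X⁻¹ʳ (A i)) (E s)) := by
    rw [rdist_sq (hY s).nonneg (hA i).isSelfAdjoint,
      traceSqLog_conjSqrt_ringInverse_conjSqrt hX (hA i) (hE s)]
  have hsum : 2 * reTrace (karcherSum w A X * H) =
      ∑ i, w i * (2 * reTrace (log (conjSqrt X⁻¹ʳ (A i)) * H)) := by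
    simp only [karcherSum, Finset.sum_mul, smul_mul_assoc, map_sum, map_smul, smul_eq_mul,
      Finset.mul_sum, mul_left_comm]
  simp only [hrdist, hsum]
  exact .fun_sum fun i _ ↦ (hasDerivAt_traceSqLog_conjSqrt (hM i) hEH hEs₀
    fun s ↦ (hE s).isSelfAdjoint).const_mul _

/- The first-order condition is applied along `s ↦ exp (s • L)`, where `L` is the Karcher sum
itself; it reads `Tr L² = 0`. -/
theorem karcherSum_eq_zero_of_forall_sum_rdist_sq_le (hA : ∀ i, (A i).PosDef) (hX : X.PosDef)
    (hXmin : ∀ Y : Matrix (Fin m) (Fin m) ℂ, Y.PosDef →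
      ∑ i, w i * rdist X (A i) ^ 2 ≤ ∑ i, w i * rdist Y (A i) ^ 2) :
    karcherSum w A X = 0 := by
  simp only [← isStrictlyPositive_iff_posDef] at hA hX hXmin
  set L := karcherSum w A X
  set E : ℝ → Matrix (Fin m) (Fin m) ℂ := fun s ↦ NormedSpace.exp (s • L)
  have hL : IsSelfAdjoint L := isSelfAdjoint_sum _ fun i _ ↦ IsSelfAdjoint.smul (.all _) .log
  have hE (s) : IsStrictlyPositive (E s) :=
    (isUnit_exp _).isStrictlyPositive (IsSelfAdjoint.smul (.all s) hL).exp_nonneg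
  have hE0 : E 0 = 1 := by simp [E]
  have hEL : HasDerivAt E L 0 := by simpa using hasDerivAt_exp_smul_const (𝕂 := ℝ) L 0
  have hmin : IsLocalMin (fun s ↦ ∑ i, w i * rdist (conjSqrt X (E s)⁻¹ʳ) (A i) ^ 2) 0 := by
    refine .of_forall fun s ↦ ?_
    simp only [hE0, Ring.inverse_one, conjSqrt_one X]
    exact hXmin _ ((isStrictlyPositive_conjSqrt_iff X _).2 (hE s).ringInverse)
  have hzero : 2 * reTrace (L * L) = 0 :=
    hmin.hasDerivAt_eq_zero (hasDerivAt_sum_rdist_sq hA hX hE hE0 hEL)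
  refine reTrace_conjTranspose_mul_self_eq_zero_iff.1 ?_
  rw [show Lᴴ = L from hL]
  linarith

theorem loewner_of_karcherSum_eq_zero (hw : ∀ i, 0 ≤ w i) (hw1 : ∑ i, w i = 1)
    (hA : ∀ i, (A i).PosDef) (hAB : ∀ i, Loewner (A i) (B i)) (hX : X.PosDef) (hZ : Z.PosDef)
    (hXA : karcherSum w A X = 0) (hZB : karcherSum w B Z = 0) : Loewner X Z :=
  le_of_karcherSum_nonneg_of_karcherSum_nonpos hw hw1
    (fun i ↦ isStrictlyPositive_iff_posDef.2 (hA i)) hAB (isStrictlyPositive_iff_posDef.2 hX)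
    (isStrictlyPositive_iff_posDef.2 hZ) hXA.ge hZB.le

end Distance

/-- Monotonicity of the least squares mean: if `Aᵢ ≤ Bᵢ` in the Loewner order for all `i`,
and `X`, `Z` are the minimizers of the respective weighted sums of squared distances, then
`X ≤ Z` in the Loewner order. -/
theorem least_squares_mean_monotone {m n : ℕ}
    (A B : Fin n → Matrix (Fin m) (Fin m) ℂ)
    (hA : ∀ i, (A i).PosDef) (hB : ∀ i, (B i).PosDef)
    (hAB : ∀ i, Loewner (A i) (B i))
    (w : Fin n → ℝ) (hw : ∀ i, 0 < w i) (hw1 : ∑ i, w i = 1)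
    (X Z : Matrix (Fin m) (Fin m) ℂ) (hX : X.PosDef) (hZ : Z.PosDef)
    (hXmin : ∀ Y : Matrix (Fin m) (Fin m) ℂ, Y.PosDef →
      ∑ i, w i * rdist X (A i) ^ 2 ≤ ∑ i, w i * rdist Y (A i) ^ 2)
    (hXuniq : ∀ X' : Matrix (Fin m) (Fin m) ℂ, X'.PosDef →
      (∀ Y : Matrix (Fin m) (Fin m) ℂ, Y.PosDef →
        ∑ i, w i * rdist X' (A i) ^ 2 ≤ ∑ i, w i * rdist Y (A i) ^ 2) → X' = X)
    (hZmin : ∀ Y : Matrix (Fin m) (Fin m) ℂ, Y.PosDef →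
      ∑ i, w i * rdist Z (B i) ^ 2 ≤ ∑ i, w i * rdist Y (B i) ^ 2)
    (hZuniq : ∀ Z' : Matrix (Fin m) (Fin m) ℂ, Z'.PosDef →
      (∀ Y : Matrix (Fin m) (Fin m) ℂ, Y.PosDef →
        ∑ i, w i * rdist Z' (B i) ^ 2 ≤ ∑ i, w i * rdist Y (B i) ^ 2) → Z' = Z) :
    Loewner X Z := by
  refine loewner_of_karcherSum_eq_zero (fun i ↦ (hw i).le) hw1 hA hAB hX hZ ?_ ?_
  · exact karcherSum_eq_zero_of_forall_sum_rdist_sq_le hA hX hXmin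
  · exact karcherSum_eq_zero_of_forall_sum_rdist_sq_le hB hZ hZmin
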